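/- Let n = p + q be odd, let S be an adjoint set of multi-indices (a family of 2^{n−1} subsets of {1,…,n} containing exactly one of each complementary pair {A, {1,…,n}∖A}), and fix an ordered multi-index A ⊆ {1,…,n} with A ≠ ∅ and A ≠ {1,…,n}. Then e^A commutes with exactly 2^{n−2} of the basis elements {e^B : B ∈ S}, anticommutes with exactly 2^{n−2} of the basis elements {e^B : B ∈ S}, commutes with exactly 2^{n−2} of the basis elements {e^B : B ∉ S}, and anticommutes with exactly 2^{n−2} of the basis elements {e^B : B ∉ S}. -/

import Mathlib

/-!
Distinct generators anticommute and each generator squares to `±1`, so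
`e^A e^B = (-1)^(|A||B| + |A ∩ B|) e^B e^A` (`eB_mul_eB`) with `e^B e^A` a unit. In the nontrivial
algebra `Cl(p, q)` a unit is not its own negative, hence `e^A`, `e^B` commute exactly when
`|A||B| + |A ∩ B|` is even and anticommute exactly when it is odd.

For `n` odd this parity is unchanged under `B ↦ Bᶜ` (`parity_compl`), and complementation swaps
`S` with its complement; so each of the two kinds occurs as often inside `S` as outside. Since
`A` is neither empty nor everything, there is an index `j` with `|A| + [j ∈ A]` odd: take `j ∈ A`
if `|A|` is even and `j ∉ A` otherwise. Toggling `j` in `B` flips the parity (`parity_toggle`), so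
the two kinds are equally frequent overall. The four counts are therefore equal, and they add up
to `2^n`.
-/

open CliffordAlgebra

/-- Diagonal metric with `p` entries `+1` and `q` entries `-1`. -/
noncomputable def eta (p q : ℕ) : Fin (p + q) → ℝ :=
  fun a => if (a : ℕ) < p then 1 else -1

/-- The quadratic form of signature `(p, q)` on `ℝⁿ`, `n = p + q`. -/
noncomputable def Qpq (p q : ℕ) : QuadraticForm ℝ (Fin (p + q) → ℝ) :=
  QuadraticMap.weightedSumSquares ℝ (eta p q)

/-- The real Clifford algebra `Cl(p, q)`. -/
noncomputable abbrev Cl (p q : ℕ) : Type :=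
  CliffordAlgebra (Qpq p q)

/-- The generator `e^a` of `Cl(p, q)`. -/
noncomputable def gen (p q : ℕ) (a : Fin (p + q)) : Cl p q :=
  CliffordAlgebra.ι (Qpq p q) (Pi.single a 1)

/-- The basis element `e^A`: the product of the generators `e^a`, `a ∈ A`,
taken in increasing order (`e^∅ = 1`). -/
noncomputable def eB (p q : ℕ) (A : Finset (Fin (p + q))) : Cl p q :=
  ((A.sort (· ≤ ·)).map (gen p q)).prod

theorem gen_mul_self (p q : ℕ) (a : Fin (p + q)) :
    gen p q a * gen p q a = algebraMap ℝ (Cl p q) (eta p q a) := by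
  rw [gen, ι_sq_scalar]
  congr 1
  rw [Qpq, QuadraticMap.weightedSumSquares_apply]
  rw [Finset.sum_eq_single a] <;> simp +contextual

theorem gen_mul_gen_of_ne (p q : ℕ) {a b : Fin (p + q)} (h : a ≠ b) :
    gen p q a * gen p q b = -(gen p q b * gen p q a) := by
  refine ι_mul_ι_comm_of_isOrtho ?_
  rw [QuadraticMap.isOrtho_def]
  simp only [Qpq, QuadraticMap.weightedSumSquares_apply, ← Finset.sum_add_distrib]
  refine Finset.sum_congr rfl fun i _ => ?_
  by_cases h1 : i = a
  · subst h1
    simp [h]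
  · simp [Pi.single_apply, h1]

theorem isUnit_gen (p q : ℕ) (a : Fin (p + q)) : IsUnit (gen p q a) := by
  have h : IsUnit (gen p q a * gen p q a) := by
    rw [gen_mul_self]
    refine IsUnit.map _ (isUnit_iff_ne_zero.2 ?_)
    unfold eta
    split_ifs <;> norm_num
  exact ((Commute.refl _).isUnit_mul_iff.1 h).1

theorem isUnit_eB (p q : ℕ) (A : Finset (Fin (p + q))) : IsUnit (eB p q A) := by
  refine List.prod_isUnit fun m hm => ?_
  obtain ⟨a, -, rfl⟩ := List.mem_map.1 hm
  exact isUnit_gen p q a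

/-- Moving one generator past a word: each letter other than `a` contributes a sign. -/
theorem gen_mul_prod (p q : ℕ) (a : Fin (p + q)) (L : List (Fin (p + q))) :
    gen p q a * (L.map (gen p q)).prod =
      (-1 : ℝ) ^ (L.length + L.count a) • ((L.map (gen p q)).prod * gen p q a) := by
  induction L with
  | nil => simp
  | cons b L ih =>
    simp only [List.map_cons, List.prod_cons, List.length_cons]
    by_cases h : a = b
    · subst h
      rw [mul_assoc (gen p q a), ih, List.count_cons_self, mul_smul_comm,
        show L.length + 1 + (L.count a + 1) = L.length + L.count a + 2 by ring, 
        pow_add _ (L.length + L.count a) 2, neg_one_sq, mul_one]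
    · rw [← mul_assoc, gen_mul_gen_of_ne p q h, neg_mul, mul_assoc, ih, mul_smul_comm,
        List.count_cons_of_ne (Ne.symm h), add_right_comm, pow_succ, mul_neg_one, neg_smul,
        mul_assoc]

theorem prod_mul_prod (p q : ℕ) (K L : List (Fin (p + q))) :
    (K.map (gen p q)).prod * (L.map (gen p q)).prod =
      (-1 : ℝ) ^ (K.map fun a => L.length + L.count a).sum •
        ((L.map (gen p q)).prod * (K.map (gen p q)).prod) := by
  induction K with
  | nil => simp
  | cons a K ih =>
    simp only [List.map_cons, List.prod_cons, List.sum_cons]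
    rw [mul_assoc, ih, mul_smul_comm, ← mul_assoc, gen_mul_prod, smul_mul_assoc, smul_smul,
      mul_assoc, ← pow_add, add_comm (List.sum _)]

/-- The number of sign changes, mod 2, in passing from `e^A e^B` to `e^B e^A`; congruent to
`|A||B| - |A ∩ B|`, with a plus sign to avoid truncated subtraction. -/
def swapSign {m : ℕ} (A B : Finset (Fin m)) : ℕ := A.card * B.card + (A ∩ B).card

theorem eB_mul_eB (p q : ℕ) (A B : Finset (Fin (p + q))) :
    eB p q A * eB p q B = (-1 : ℝ) ^ swapSign A B • (eB p q B * eB p q A) := by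
  rw [eB, eB, prod_mul_prod]
  congr 2
  have h1 : ((A.sort (· ≤ ·)).map fun a =>
      (B.sort (· ≤ ·)).length + (B.sort (· ≤ ·)).count a).sum =
      ∑ a ∈ A, (B.card + if a ∈ B then 1 else 0) := by
    rw [← List.sum_toFinset _ (A.sort_nodup _), Finset.sort_toFinset]
    refine Finset.sum_congr rfl fun a _ => ?_
    rw [Finset.length_sort, List.Nodup.count (B.sort_nodup _)]
    simp
  rw [h1, Finset.sum_add_distrib, Finset.sum_const, smul_eq_mul, ← Finset.card_filter,
    Finset.filter_mem_eq_inter, swapSign]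

theorem eB_mul_eB_ne_neg (p q : ℕ) (A B : Finset (Fin (p + q))) :
    eB p q B * eB p q A ≠ -(eB p q B * eB p q A) := by
  intro h
  have h0 := ((isUnit_eB p q B).mul (isUnit_eB p q A)).ne_zero
  have h2 : (2 : ℝ) • (eB p q B * eB p q A) = 0 := by
    rw [two_smul]
    exact eq_neg_iff_add_eq_zero.1 h
  exact h0 ((smul_eq_zero.1 h2).resolve_left two_ne_zero)

theorem commute_iff (p q : ℕ) (A B : Finset (Fin (p + q))) :
    Commute (eB p q A) (eB p q B) ↔ Even (swapSign A B) := by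
  rw [commute_iff_eq, eB_mul_eB]
  rcases Nat.even_or_odd (swapSign A B) with h | h
  · simp [h, h.neg_one_pow]
  · simpa [Nat.not_even_iff_odd.2 h, h.neg_one_pow] using (eB_mul_eB_ne_neg p q A B).symm

theorem anticommute_iff (p q : ℕ) (A B : Finset (Fin (p + q))) :
    eB p q A * eB p q B = -(eB p q B * eB p q A) ↔ ¬ Even (swapSign A B) := by
  rw [eB_mul_eB]
  rcases Nat.even_or_odd (swapSign A B) with h | h
  · simp [h, h.neg_one_pow, eB_mul_eB_ne_neg p q A B]
  · simp [Nat.not_even_iff_odd.2 h, h.neg_one_pow]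

theorem parity_compl {m : ℕ} (hm : Odd m) (A B : Finset (Fin m)) :
    Even (swapSign A Bᶜ) ↔ Even (swapSign A B) := by
  have h1 : B.card + Bᶜ.card = m := by simpa using B.card_add_card_compl
  have h2 : (A ∩ B).card + (A ∩ Bᶜ).card = A.card := by
    rw [← Finset.sdiff_eq_inter_compl]
    exact Finset.card_inter_add_card_sdiff A B
  rw [← h1] at hm
  unfold swapSign
  rw [← h2]
  simp only [Nat.even_add, Nat.even_mul, ← Nat.not_even_iff_odd] at hm ⊢
  tauto

theorem parity_toggle {m : ℕ} (A B : Finset (Fin m)) (j : Fin m)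
    (hj : Even A.card ↔ j ∈ A) :
    Even (swapSign A (symmDiff B {j})) ↔ ¬ Even (swapSign A B) := by
  -- Toggling is an involution, so the case `j ∉ B` suffices.
  have key : ∀ B : Finset (Fin m), j ∉ B →
      (Even (swapSign A (insert j B)) ↔ ¬ Even (swapSign A B)) := by
    intro B hB
    unfold swapSign
    rw [Finset.card_insert_of_notMem hB]
    by_cases h : j ∈ A
    · rw [Finset.inter_insert_of_mem h, Finset.card_insert_of_notMem (by simp [hB])]
      simp only [h, iff_true] at hj
      simp [Nat.even_add, hj, Nat.even_add_one]
    · rw [Finset.inter_insert_of_notMem h]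
      simp only [h, iff_false] at hj
      simp only [Nat.even_add, Nat.even_mul, hj, Nat.even_add_one, false_or]
      tauto
  by_cases hB : j ∈ B
  · have e : symmDiff B {j} = B.erase j := by
      ext x; simp only [Finset.mem_symmDiff, Finset.mem_singleton, Finset.mem_erase]
      grind
    have := key (B.erase j) (by simp)
    rw [Finset.insert_erase hB] at this
    rw [e]; tauto
  · have e : symmDiff B {j} = insert j B := by
      ext x; simp only [Finset.mem_symmDiff, Finset.mem_singleton, Finset.mem_insert]
      grind
    rw [e]; exact key B hB

theorem exists_toggle {m : ℕ} (A : Finset (Fin m)) (hA1 : A ≠ ∅) (hA2 : A ≠ Finset.univ) :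
    ∃ j, Even A.card ↔ j ∈ A := by
  by_cases h : Even A.card
  · obtain ⟨j, hj⟩ := Finset.nonempty_iff_ne_empty.2 hA1
    exact ⟨j, by simp [h, hj]⟩
  · obtain ⟨j, hj⟩ : ∃ j, j ∉ A := by
      by_contra! hc
      exact hA2 (Finset.eq_univ_iff_forall.2 hc)
    exact ⟨j, by simp [h, hj]⟩

/-- For odd `n`, an adjoint set `S` of multi-indices (one of each complementary pair
`{B, Bᶜ}`) and a multi-index `A` with `A ≠ ∅`, `A ≠ {1,…,n}`: `e^A` commutes with
exactly `2^{n−2}` of the `e^B`, `B ∈ S`, anticommutes with exactly `2^{n−2}` of the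
`e^B`, `B ∈ S`, commutes with exactly `2^{n−2}` of the `e^B`, `B ∉ S`, and
anticommutes with exactly `2^{n−2}` of the `e^B`, `B ∉ S`. -/
theorem count_commuting_adjoint_odd (p q : ℕ) (hn : 2 ≤ p + q) (hodd : Odd (p + q))
    (S : Finset (Finset (Fin (p + q)))) (hS : ∀ B, B ∈ S ↔ Bᶜ ∉ S)
    (A : Finset (Fin (p + q))) (hA1 : A ≠ ∅) (hA2 : A ≠ Finset.univ) :
    {B : Finset (Fin (p + q)) |
        B ∈ S ∧ Commute (eB p q A) (eB p q B)}.ncard = 2 ^ (p + q - 2) ∧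
    {B : Finset (Fin (p + q)) |
        B ∈ S ∧ eB p q A * eB p q B = -(eB p q B * eB p q A)}.ncard = 2 ^ (p + q - 2) ∧
    {B : Finset (Fin (p + q)) |
        B ∉ S ∧ Commute (eB p q A) (eB p q B)}.ncard = 2 ^ (p + q - 2) ∧
    {B : Finset (Fin (p + q)) |
        B ∉ S ∧ eB p q A * eB p q B = -(eB p q B * eB p q A)}.ncard =
      2 ^ (p + q - 2) := by
  simp only [anticommute_iff, commute_iff]
  obtain ⟨j, hj⟩ := exists_toggle A hA1 hA2
  have hcompl := parity_compl hodd A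
  have htog := fun B => parity_toggle A B j hj
  generalize swapSign A = f at *
  have ncard_filter : ∀ P : Finset (Fin (p + q)) → Prop, ∀ [DecidablePred P],
      {B | P B}.ncard = (Finset.univ.filter P).card := by
    intro P _
    rw [← Set.ncard_coe_finset]; simp
  simp only [ncard_filter]
  have h1 : (Finset.univ.filter fun B => B ∈ S ∧ Even (f B)).card =
      (Finset.univ.filter fun B => B ∉ S ∧ Even (f B)).card :=
    Finset.card_bij' (fun B _ => Bᶜ) (fun B _ => Bᶜ) (by simp; grind) (by simp; grind)
      (by simp) (by simp)
  have h2 : (Finset.univ.filter fun B => B ∈ S ∧ ¬ Even (f B)).card =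
      (Finset.univ.filter fun B => B ∉ S ∧ ¬ Even (f B)).card :=
    Finset.card_bij' (fun B _ => Bᶜ) (fun B _ => Bᶜ) (by simp; grind) (by simp; grind)
      (by simp) (by simp)
  have h3 : (Finset.univ.filter fun B => Even (f B)).card =
      (Finset.univ.filter fun B => ¬ Even (f B)).card :=
    Finset.card_bij' (fun B _ => symmDiff B {j}) (fun B _ => symmDiff B {j})
      (by simp [-Nat.not_even_iff_odd, htog])
      (by simp [-Nat.not_even_iff_odd, htog]) (by simp) (by simp)
  have h4 : (Finset.univ.filter fun B => Even (f B)).card +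
      (Finset.univ.filter fun B => ¬ Even (f B)).card = 2 ^ (p + q) := by
    rw [Finset.card_filter_add_card_filter_not]; simp
  have h5 : ∀ P : Finset (Fin (p + q)) → Prop, ∀ [DecidablePred P],
      (Finset.univ.filter fun B => B ∈ S ∧ P B).card +
      (Finset.univ.filter fun B => B ∉ S ∧ P B).card = (Finset.univ.filter P).card := by
    intro P _
    rw [← Finset.card_filter_add_card_filter_not (s := Finset.univ.filter P) (· ∈ S),
      Finset.filter_filter, Finset.filter_filter]
    simp only [and_comm]
  have h6 := h5 (fun B => Even (f B))
  have h7 := h5 (fun B => ¬ Even (f B))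
  obtain ⟨k, hk⟩ := Nat.exists_eq_add_of_le' hn
  have h8 : 2 ^ (p + q) = 4 * 2 ^ (p + q - 2) := by
    rw [hk, Nat.add_sub_cancel, pow_add]; ring
  omega
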